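/- arXiv:0711.1135 — 2 statements merged into one kernel-verified Lean document; each statement's English description precedes it below -/
import Mathlib

section
/- Let V, W be representations of a quiver Q over a field K and let V⊕W be their pointwise direct sum. Then for every vertex x, Γ(V⊕W)_x = Γ(V)_x × Γ(W)_x and Δ(V⊕W)_x = Δ(V)_x × Δ(W)_x; consequently the global tensor functor is additive: rkf(V⊕W) is isomorphic to rkf(V) ⊕ rkf(W) as representations of Q. -/
open Submodule

section Defs

variable {K : Type} [Field K]
variable {Q₀ Q₁ : Type} (tl hd : Q₁ → Q₀)
variable (Vx : Q₀ → Type) [∀ x, AddCommGroup (Vx x)] [∀ x, Module K (Vx x)]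
variable (Va : ∀ a : Q₁, Vx (tl a) →ₗ[K] Vx (hd a))

/-- `U` is a subrepresentation of the representation `(Vx, Va)`. -/
def IsSubrep (U : ∀ x, Submodule K (Vx x)) : Prop :=
  ∀ a : Q₁, (U (tl a)).map (Va a) ≤ U (hd a)

/-- `U` is an epimorphic subrepresentation: `V_a(U_{ta}) = U_{ha}` for every arrow. -/
def IsEpiSub (U : ∀ x, Submodule K (Vx x)) : Prop :=
  ∀ a : Q₁, (U (tl a)).map (Va a) = U (hd a)

/-- `N` is a coclosed subrepresentation: it is a subrepresentation and
`V_a⁻¹(N_{ha}) ⊆ N_{ta}` for every arrow. -/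
def IsCoclosedSub (N : ∀ x, Submodule K (Vx x)) : Prop :=
  IsSubrep tl hd Vx Va N ∧ ∀ a : Q₁, (N (hd a)).comap (Va a) ≤ N (tl a)

/-- `Γ(V)`, the sum of all epimorphic subrepresentations. -/
def Gamma (x : Q₀) : Submodule K (Vx x) :=
  ⨆ U : {U : ∀ y, Submodule K (Vx y) // IsEpiSub tl hd Vx Va U}, U.1 x

/-- `Δ(V)`, the intersection of all coclosed subrepresentations. -/
def Delta (x : Q₀) : Submodule K (Vx x) :=
  ⨅ N : {N : ∀ y, Submodule K (Vx y) // IsCoclosedSub tl hd Vx Va N}, N.1 x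

lemma le_gamma {U : ∀ y, Submodule K (Vx y)} (hU : IsEpiSub tl hd Vx Va U) (x : Q₀) :
    U x ≤ Gamma tl hd Vx Va x :=
  le_iSup (fun (W : {U // IsEpiSub tl hd Vx Va U}) => W.1 x) ⟨U, hU⟩

lemma delta_le {N : ∀ y, Submodule K (Vx y)} (hN : IsCoclosedSub tl hd Vx Va N) (x : Q₀) :
    Delta tl hd Vx Va x ≤ N x :=
  iInf_le (fun (W : {N // IsCoclosedSub tl hd Vx Va N}) => W.1 x) ⟨N, hN⟩

lemma gamma_epi : IsEpiSub tl hd Vx Va (Gamma tl hd Vx Va) := by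
  intro a
  apply le_antisymm
  · rw [Gamma, Submodule.map_iSup]
    refine iSup_le fun U => ?_
    rw [U.2 a]
    exact le_gamma tl hd Vx Va U.2 (hd a)
  · refine iSup_le fun U => ?_
    rw [← U.2 a]
    exact Submodule.map_mono (le_gamma tl hd Vx Va U.2 (tl a))

lemma gamma_subrep : IsSubrep tl hd Vx Va (Gamma tl hd Vx Va) :=
  fun a => le_of_eq (gamma_epi tl hd Vx Va a)

lemma delta_subrep : IsSubrep tl hd Vx Va (Delta tl hd Vx Va) := by
  intro a
  have : ∀ N : {N // IsCoclosedSub tl hd Vx Va N},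
      (Delta tl hd Vx Va (tl a)).map (Va a) ≤ N.1 (hd a) :=
    fun N => le_trans (Submodule.map_mono (delta_le tl hd Vx Va N.2 (tl a))) (N.2.1 a)
  exact le_iInf this

/-- `Γ(V) + Δ(V)` pointwise. -/
abbrev GD (x : Q₀) : Submodule K (Vx x) := Gamma tl hd Vx Va x ⊔ Delta tl hd Vx Va x

/-- `Δ(V)`, seen inside `Γ(V) + Δ(V)`. -/
abbrev rkfDen (x : Q₀) : Submodule K (GD tl hd Vx Va x) :=
  (Delta tl hd Vx Va x).comap (GD tl hd Vx Va x).subtype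

/-- The vertex spaces `(Γ(V)_x + Δ(V)_x)/Δ(V)_x` of the global tensor functor. -/
abbrev rkfSpace (x : Q₀) : Type :=
  GD tl hd Vx Va x ⧸ rkfDen tl hd Vx Va x

lemma gd_mapsTo (a : Q₁) : ∀ v ∈ GD tl hd Vx Va (tl a), Va a v ∈ GD tl hd Vx Va (hd a) := by
  intro v hv
  have : (GD tl hd Vx Va (tl a)).map (Va a) ≤ GD tl hd Vx Va (hd a) := by
    rw [Submodule.map_sup]
    exact sup_le_sup (gamma_subrep tl hd Vx Va a) (delta_subrep tl hd Vx Va a)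
  exact this ⟨v, hv, rfl⟩

/-- The arrow maps of the global tensor functor, induced by the `V_a`. -/
def rkfMap (a : Q₁) : rkfSpace tl hd Vx Va (tl a) →ₗ[K] rkfSpace tl hd Vx Va (hd a) :=
  Submodule.liftQ _
    ((rkfDen tl hd Vx Va (hd a)).mkQ ∘ₗ (Va a).restrict (gd_mapsTo tl hd Vx Va a))
    (by
      intro v hv
      simp only [LinearMap.mem_ker, LinearMap.comp_apply, Submodule.mkQ_apply,
        Submodule.Quotient.mk_eq_zero]
      have hv' : (v : Vx (tl a)) ∈ Delta tl hd Vx Va (tl a) := hv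
      show (Va a) (v : Vx (tl a)) ∈ Delta tl hd Vx Va (hd a)
      exact delta_subrep tl hd Vx Va a ⟨(v : Vx (tl a)), hv', rfl⟩)

/-- Isomorphism of quiver representations. -/
def RepIso (Wx : Q₀ → Type) [∀ x, AddCommGroup (Wx x)] [∀ x, Module K (Wx x)]
    (Wa : ∀ a : Q₁, Wx (tl a) →ₗ[K] Wx (hd a)) : Prop :=
  ∃ φ : ∀ x, Vx x ≃ₗ[K] Wx x, ∀ (a : Q₁) (v : Vx (tl a)), φ (hd a) (Va a v) = Wa a (φ (tl a) v)

end Defs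

/-!
`Γ`, `Δ` and `rkf` are functorial: a morphism of representations sends epimorphic subrepresentations
to epimorphic ones by taking images, and coclosed ones to coclosed ones by taking preimages. The
projections and inclusions of a direct sum are morphisms, so the projections bound `Γ(V ⊕ W)` and
`Δ(V ⊕ W)` from above and the inclusions bound them from below. The same four morphisms induce the
two mutually inverse maps between `rkf(V ⊕ W)` and `rkf(V) ⊕ rkf(W)`.
-/

section Functoriality

variable {K : Type} [Field K] {Q₀ Q₁ : Type} {tl hd : Q₁ → Q₀}
variable {Vx : Q₀ → Type} [∀ x, AddCommGroup (Vx x)] [∀ x, Module K (Vx x)]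
variable {Va : ∀ a : Q₁, Vx (tl a) →ₗ[K] Vx (hd a)}
variable {Wx : Q₀ → Type} [∀ x, AddCommGroup (Wx x)] [∀ x, Module K (Wx x)]
variable {Wa : ∀ a : Q₁, Wx (tl a) →ₗ[K] Wx (hd a)}

variable (tl hd Vx Va Wx Wa) in
/-- A family of linear maps `f x : V_x → W_x` is a morphism of representations when it commutes with
the arrow maps. -/
def IsRepHom (f : ∀ x, Vx x →ₗ[K] Wx x) : Prop :=
  ∀ a : Q₁, f (hd a) ∘ₗ Va a = Wa a ∘ₗ f (tl a)

variable {f : ∀ x, Vx x →ₗ[K] Wx x}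

lemma IsEpiSub.map {U : ∀ x, Submodule K (Vx x)} (hU : IsEpiSub tl hd Vx Va U)
    (hf : IsRepHom tl hd Vx Va Wx Wa f) :
    IsEpiSub tl hd Wx Wa (fun x => (U x).map (f x)) := fun a =>
  calc ((U (tl a)).map (f (tl a))).map (Wa a)
      = ((U (tl a)).map (Va a)).map (f (hd a)) := by
        rw [← Submodule.map_comp, ← Submodule.map_comp, hf a]
    _ = (U (hd a)).map (f (hd a)) := by rw [hU a]

lemma isCoclosedSub_iff_comap_eq {N : ∀ x, Submodule K (Vx x)} :
    IsCoclosedSub tl hd Vx Va N ↔ ∀ a, (N (hd a)).comap (Va a) = N (tl a) := by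
  simp only [IsCoclosedSub, IsSubrep, Submodule.map_le_iff_le_comap, ← forall_and,
    ← ge_antisymm_iff]

lemma IsCoclosedSub.comap {N : ∀ x, Submodule K (Wx x)} (hN : IsCoclosedSub tl hd Wx Wa N)
    (hf : IsRepHom tl hd Vx Va Wx Wa f) :
    IsCoclosedSub tl hd Vx Va (fun x => (N x).comap (f x)) :=
  isCoclosedSub_iff_comap_eq.mpr fun a =>
    calc ((N (hd a)).comap (f (hd a))).comap (Va a)
        = ((N (hd a)).comap (Wa a)).comap (f (tl a)) := by
          rw [← Submodule.comap_comp, ← Submodule.comap_comp, hf a]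
      _ = (N (tl a)).comap (f (tl a)) := by rw [isCoclosedSub_iff_comap_eq.mp hN a]

namespace IsRepHom

lemma map_gamma_le (hf : IsRepHom tl hd Vx Va Wx Wa f) (x : Q₀) :
    (Gamma tl hd Vx Va x).map (f x) ≤ Gamma tl hd Wx Wa x :=
  le_gamma tl hd Wx Wa ((gamma_epi tl hd Vx Va).map hf) x

lemma map_delta_le (hf : IsRepHom tl hd Vx Va Wx Wa f) (x : Q₀) :
    (Delta tl hd Vx Va x).map (f x) ≤ Delta tl hd Wx Wa x :=
  le_iInf fun N => Submodule.map_le_iff_le_comap.mpr (delta_le tl hd Vx Va (N.2.comap hf) x)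

lemma map_gd_le (hf : IsRepHom tl hd Vx Va Wx Wa f) (x : Q₀) :
    (GD tl hd Vx Va x).map (f x) ≤ GD tl hd Wx Wa x := by
  rw [Submodule.map_sup]
  exact sup_le_sup (hf.map_gamma_le x) (hf.map_delta_le x)

/-- The action of the global tensor functor on a morphism of representations. -/
def rkfHom (hf : IsRepHom tl hd Vx Va Wx Wa f) (x : Q₀) :
    rkfSpace tl hd Vx Va x →ₗ[K] rkfSpace tl hd Wx Wa x :=
  Submodule.mapQ _ _
    ((f x).restrict (Submodule.map_le_iff_le_comap.mp (hf.map_gd_le x)))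
    fun _ hv => Submodule.map_le_iff_le_comap.mp (hf.map_delta_le x) hv

lemma isRepHom_rkfHom (hf : IsRepHom tl hd Vx Va Wx Wa f) :
    IsRepHom tl hd (rkfSpace tl hd Vx Va) (rkfMap tl hd Vx Va)
      (rkfSpace tl hd Wx Wa) (rkfMap tl hd Wx Wa) hf.rkfHom := by
  intro a
  ext v
  exact congrArg (Submodule.Quotient.mk (p := rkfDen tl hd Wx Wa (hd a)))
    (Subtype.ext (LinearMap.congr_fun (hf a) v))

end IsRepHom

end Functoriality

section DirectSum

variable {K : Type} [Field K] {Q₀ Q₁ : Type} (tl hd : Q₁ → Q₀)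
variable (Vx : Q₀ → Type) [∀ x, AddCommGroup (Vx x)] [∀ x, Module K (Vx x)]
variable (Va : ∀ a : Q₁, Vx (tl a) →ₗ[K] Vx (hd a))
variable (Wx : Q₀ → Type) [∀ x, AddCommGroup (Wx x)] [∀ x, Module K (Wx x)]
variable (Wa : ∀ a : Q₁, Wx (tl a) →ₗ[K] Wx (hd a))

lemma isRepHom_fst : IsRepHom tl hd (fun y => Vx y × Wx y) (fun a => (Va a).prodMap (Wa a)) Vx Va
    (fun x => LinearMap.fst K (Vx x) (Wx x)) :=
  fun _ => rfl

lemma isRepHom_snd : IsRepHom tl hd (fun y => Vx y × Wx y) (fun a => (Va a).prodMap (Wa a)) Wx Wa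
    (fun x => LinearMap.snd K (Vx x) (Wx x)) :=
  fun _ => rfl

lemma isRepHom_inl : IsRepHom tl hd Vx Va (fun y => Vx y × Wx y) (fun a => (Va a).prodMap (Wa a))
    (fun x => LinearMap.inl K (Vx x) (Wx x)) := by
  intro a
  ext v <;> simp

lemma isRepHom_inr : IsRepHom tl hd Wx Wa (fun y => Vx y × Wx y) (fun a => (Va a).prodMap (Wa a))
    (fun x => LinearMap.inr K (Vx x) (Wx x)) := by
  intro a
  ext w <;> simp

lemma gamma_prod (x : Q₀) :
    Gamma tl hd (fun y => Vx y × Wx y) (fun a => (Va a).prodMap (Wa a)) x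
      = (Gamma tl hd Vx Va x).prod (Gamma tl hd Wx Wa x) :=
  le_antisymm
    ((Submodule.le_prod_iff ..).mpr ⟨(isRepHom_fst tl hd Vx Va Wx Wa).map_gamma_le x,
      (isRepHom_snd tl hd Vx Va Wx Wa).map_gamma_le x⟩)
    ((Submodule.prod_le_iff ..).mpr ⟨(isRepHom_inl tl hd Vx Va Wx Wa).map_gamma_le x,
      (isRepHom_inr tl hd Vx Va Wx Wa).map_gamma_le x⟩)

lemma delta_prod (x : Q₀) :
    Delta tl hd (fun y => Vx y × Wx y) (fun a => (Va a).prodMap (Wa a)) x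
      = (Delta tl hd Vx Va x).prod (Delta tl hd Wx Wa x) :=
  le_antisymm
    ((Submodule.le_prod_iff ..).mpr ⟨(isRepHom_fst tl hd Vx Va Wx Wa).map_delta_le x,
      (isRepHom_snd tl hd Vx Va Wx Wa).map_delta_le x⟩)
    ((Submodule.prod_le_iff ..).mpr ⟨(isRepHom_inl tl hd Vx Va Wx Wa).map_delta_le x,
      (isRepHom_inr tl hd Vx Va Wx Wa).map_delta_le x⟩)

/-- The isomorphism `rkf(V ⊕ W)_x ≃ rkf(V)_x × rkf(W)_x` induced by the projections, with inverse
induced by the inclusions. -/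
def rkfProdEquiv (x : Q₀) :
    rkfSpace tl hd (fun y => Vx y × Wx y) (fun a => (Va a).prodMap (Wa a)) x ≃ₗ[K]
      rkfSpace tl hd Vx Va x × rkfSpace tl hd Wx Wa x :=
  LinearEquiv.ofLinearMap
    (((isRepHom_fst tl hd Vx Va Wx Wa).rkfHom x).prod ((isRepHom_snd tl hd Vx Va Wx Wa).rkfHom x))
    (((isRepHom_inl tl hd Vx Va Wx Wa).rkfHom x).coprod
      ((isRepHom_inr tl hd Vx Va Wx Wa).rkfHom x))
    (by
      refine LinearMap.ext fun ⟨p, q⟩ => ?_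
      obtain ⟨v, rfl⟩ := Submodule.Quotient.mk_surjective _ p
      obtain ⟨w, rfl⟩ := Submodule.Quotient.mk_surjective _ q
      exact Prod.ext (congrArg Submodule.Quotient.mk (Subtype.ext (add_zero v.1)))
        (congrArg Submodule.Quotient.mk (Subtype.ext (zero_add w.1))))
    (by
      ext v
      exact congrArg Submodule.Quotient.mk (Subtype.ext (Prod.fst_add_snd v.1)))

lemma repIso_rkf_prod :
    RepIso tl hd
      (rkfSpace tl hd (fun y => Vx y × Wx y) (fun a => (Va a).prodMap (Wa a)))
      (rkfMap tl hd (fun y => Vx y × Wx y) (fun a => (Va a).prodMap (Wa a)))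
      (fun x => rkfSpace tl hd Vx Va x × rkfSpace tl hd Wx Wa x)
      (fun a => (rkfMap tl hd Vx Va a).prodMap (rkfMap tl hd Wx Wa a)) :=
  ⟨rkfProdEquiv tl hd Vx Va Wx Wa, fun a v => Prod.ext
    (LinearMap.congr_fun ((isRepHom_fst tl hd Vx Va Wx Wa).isRepHom_rkfHom a) v)
    (LinearMap.congr_fun ((isRepHom_snd tl hd Vx Va Wx Wa).isRepHom_rkfHom a) v)⟩

end DirectSum

theorem stmt_2_general {K : Type} [Field K] {Q₀ Q₁ : Type} (tl hd : Q₁ → Q₀)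
    (Vx : Q₀ → Type) [∀ x, AddCommGroup (Vx x)] [∀ x, Module K (Vx x)]
    (Va : ∀ a : Q₁, Vx (tl a) →ₗ[K] Vx (hd a))
    (Wx : Q₀ → Type) [∀ x, AddCommGroup (Wx x)] [∀ x, Module K (Wx x)]
    (Wa : ∀ a : Q₁, Wx (tl a) →ₗ[K] Wx (hd a)) :
    (∀ x : Q₀, Gamma tl hd (fun y => Vx y × Wx y) (fun a => (Va a).prodMap (Wa a)) x
        = (Gamma tl hd Vx Va x).prod (Gamma tl hd Wx Wa x)) ∧
    (∀ x : Q₀, Delta tl hd (fun y => Vx y × Wx y) (fun a => (Va a).prodMap (Wa a)) x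
        = (Delta tl hd Vx Va x).prod (Delta tl hd Wx Wa x)) ∧
    (∃ φ : ∀ x : Q₀,
        rkfSpace tl hd (fun y => Vx y × Wx y) (fun a => (Va a).prodMap (Wa a)) x ≃ₗ[K]
          rkfSpace tl hd Vx Va x × rkfSpace tl hd Wx Wa x,
      ∀ (a : Q₁)
        (v : rkfSpace tl hd (fun y => Vx y × Wx y) (fun a => (Va a).prodMap (Wa a)) (tl a)),
        φ (hd a) (rkfMap tl hd (fun y => Vx y × Wx y) (fun a => (Va a).prodMap (Wa a)) a v)
          = ((rkfMap tl hd Vx Va a).prodMap (rkfMap tl hd Wx Wa a)) (φ (tl a) v)) :=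
  ⟨gamma_prod tl hd Vx Va Wx Wa, delta_prod tl hd Vx Va Wx Wa,
    repIso_rkf_prod tl hd Vx Va Wx Wa⟩

/-- `Γ` and `Δ` of a direct sum are the products of `Γ`'s and `Δ`'s,
and the global tensor functor is additive: `rkf(V ⊕ W) ≅ rkf(V) ⊕ rkf(W)`. -/
theorem stmt_2 {K : Type} [Field K] {Q₀ Q₁ : Type} [Fintype Q₀] [Fintype Q₁]
    (tl hd : Q₁ → Q₀)
    (Vx : Q₀ → Type) [∀ x, AddCommGroup (Vx x)] [∀ x, Module K (Vx x)]
    [∀ x, FiniteDimensional K (Vx x)]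
    (Va : ∀ a : Q₁, Vx (tl a) →ₗ[K] Vx (hd a))
    (Wx : Q₀ → Type) [∀ x, AddCommGroup (Wx x)] [∀ x, Module K (Wx x)]
    [∀ x, FiniteDimensional K (Wx x)]
    (Wa : ∀ a : Q₁, Wx (tl a) →ₗ[K] Wx (hd a)) :
    (∀ x : Q₀, Gamma tl hd (fun y => Vx y × Wx y) (fun a => (Va a).prodMap (Wa a)) x
        = (Gamma tl hd Vx Va x).prod (Gamma tl hd Wx Wa x)) ∧
    (∀ x : Q₀, Delta tl hd (fun y => Vx y × Wx y) (fun a => (Va a).prodMap (Wa a)) x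
        = (Delta tl hd Vx Va x).prod (Delta tl hd Wx Wa x)) ∧
    (∃ φ : ∀ x : Q₀,
        rkfSpace tl hd (fun y => Vx y × Wx y) (fun a => (Va a).prodMap (Wa a)) x ≃ₗ[K]
          rkfSpace tl hd Vx Va x × rkfSpace tl hd Wx Wa x,
      ∀ (a : Q₁) (v : rkfSpace tl hd (fun y => Vx y × Wx y) (fun a => (Va a).prodMap (Wa a)) (tl a)),
        φ (hd a) (rkfMap tl hd (fun y => Vx y × Wx y) (fun a => (Va a).prodMap (Wa a)) a v)
          = ((rkfMap tl hd Vx Va a).prodMap (rkfMap tl hd Wx Wa a)) (φ (tl a) v)) :=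
  stmt_2_general tl hd Vx Va Wx Wa
end

section
/- Let V be a representation of a quiver Q over a field K. Then for every arrow a of Q, the induced linear map (rkf V)_a : (rkf V)_{ta} → (rkf V)_{ha} is a bijection. That is, rkf(V) is both epimorphic and monomorphic. -/
open Submodule

/-! Every class in `rkf(V)` is represented by an element of `Γ(V)`, and `V_a` maps `Γ(V)` onto
`Γ(V)`; this gives surjectivity. Dually, `Δ(V)` is itself coclosed, so a vector that `V_a` sends
into `Δ(V)` already lies in `Δ(V)`; this gives injectivity. -/

section SubmoduleQuotient

variable {R M N : Type*} [Ring R] [AddCommGroup M] [AddCommGroup N] [Module R M] [Module R N]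

lemma subToSupQuotient_surjective (p q : Submodule R M) :
    Function.Surjective (LinearMap.subToSupQuotient p q) :=
  (LinearMap.quotientInfEquivSupQuotient_surjective p q).comp (mkQ_surjective _)

variable {f : M →ₗ[R] N}

lemma mapQ_restrict_injective {s q : Submodule R M} {s' q' : Submodule R N}
    (hs : ∀ v ∈ s, f v ∈ s') (hq : q ≤ q'.comap f) (hcomap : q'.comap f ≤ q) :
    Function.Injective
      (mapQ (q.comap s.subtype) (q'.comap s'.subtype) (f.restrict hs) fun _ hv => hq hv) :=
  LinearMap.ker_eq_bot.mp <| ker_liftQ_eq_bot _ _ _ fun v hv =>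
    have hfv : f v ∈ q' := (Quotient.mk_eq_zero (q'.comap s'.subtype)).mp hv
    hcomap hfv

lemma mapQ_restrict_sup_surjective {p q : Submodule R M} {p' q' : Submodule R N}
    (hs : ∀ v ∈ p ⊔ q, f v ∈ p' ⊔ q') (hq : q ≤ q'.comap f) (hmap : p' ≤ p.map f) :
    Function.Surjective
      (mapQ (q.comap (p ⊔ q).subtype) (q'.comap (p' ⊔ q').subtype) (f.restrict hs)
        fun _ hv => hq hv) := by
  intro y
  obtain ⟨⟨w, hw⟩, rfl⟩ := subToSupQuotient_surjective p' q' y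
  obtain ⟨u, hu, rfl⟩ := hmap hw
  exact ⟨LinearMap.subToSupQuotient p q ⟨u, hu⟩, rfl⟩

end SubmoduleQuotient

section Representation

variable {K : Type} [Field K] {Q₀ Q₁ : Type} (tl hd : Q₁ → Q₀)
  (Vx : Q₀ → Type) [∀ x, AddCommGroup (Vx x)] [∀ x, Module K (Vx x)]
  (Va : ∀ a : Q₁, Vx (tl a) →ₗ[K] Vx (hd a))

lemma delta_coclosed : IsCoclosedSub tl hd Vx Va (Delta tl hd Vx Va) :=
  ⟨delta_subrep tl hd Vx Va, fun a => le_iInf fun N =>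
    (comap_mono (delta_le tl hd Vx Va N.2 (hd a))).trans (N.2.2 a)⟩

theorem stmt_3_general (a : Q₁) : Function.Bijective (rkfMap tl hd Vx Va a) := by
  have delta_le_comap : Delta tl hd Vx Va (tl a) ≤ (Delta tl hd Vx Va (hd a)).comap (Va a) :=
    map_le_iff_le_comap.mp (delta_subrep tl hd Vx Va a)
  have comap_le_delta : (Delta tl hd Vx Va (hd a)).comap (Va a) ≤ Delta tl hd Vx Va (tl a) :=
    (delta_coclosed tl hd Vx Va).2 a
  have gamma_le_map : Gamma tl hd Vx Va (hd a) ≤ (Gamma tl hd Vx Va (tl a)).map (Va a) :=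
    (gamma_epi tl hd Vx Va a).ge
  exact ⟨mapQ_restrict_injective (gd_mapsTo tl hd Vx Va a) delta_le_comap comap_le_delta,
    mapQ_restrict_sup_surjective (gd_mapsTo tl hd Vx Va a) delta_le_comap gamma_le_map⟩

end Representation

/-- for every arrow `a`, the induced map `(rkf V)_a` is a bijection,
i.e. `rkf(V)` is both epimorphic and monomorphic. -/
theorem stmt_3 {K : Type} [Field K] {Q₀ Q₁ : Type} [Fintype Q₀] [Fintype Q₁]
    (tl hd : Q₁ → Q₀)
    (Vx : Q₀ → Type) [∀ x, AddCommGroup (Vx x)] [∀ x, Module K (Vx x)]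
    [∀ x, FiniteDimensional K (Vx x)]
    (Va : ∀ a : Q₁, Vx (tl a) →ₗ[K] Vx (hd a)) :
    ∀ a : Q₁, Function.Bijective (rkfMap tl hd Vx Va a) :=
  stmt_3_general tl hd Vx Va
end
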